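/- Let ε, e, f be real numbers with 0 < ε < 1, 1 ≤ e ≤ 2/ε, and f ≥ 1, and set s = 1/e. Then the quantity 2·s·f − s²·e is positive, and (2 + s·(2 − ε·e))² / (2·s·f − s²·e) ≤ 8/ε + 4 − 2ε. -/

import Mathlib

/-!
For `s = 1 / e` the denominator is `(2 * f - 1) / e ≥ 1 / e`, and the numerator is the square
of `(2 - ε) + 2 / e`. The quotient is therefore at most
`((2 - ε) + 2 / e) ^ 2 * e = (2 - ε) ^ 2 * e + 4 * (2 - ε) + 4 / e`,
whose first term is largest at `e = 2 / ε` and whose last term is largest at `e = 1`.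
-/

section

variable {K : Type*} [Field K]

lemma add_div_sq_mul_self {e : K} (he : e ≠ 0) (a b : K) :
    (a + b / e) ^ 2 * e = a ^ 2 * e + 2 * a * b + b ^ 2 / e := by
  field_simp
  ring

lemma two_mul_one_div_mul_sub_one_div_sq_mul {e : K} (he : e ≠ 0) (f : K) :
    2 * (1 / e) * f - (1 / e) ^ 2 * e = (2 * f - 1) / e := by
  field_simp

variable [LinearOrder K] [IsStrictOrderedRing K]

lemma add_div_sq_mul_self_le {m e M : K} (hm : 0 < m) (hme : m ≤ e) (heM : e ≤ M) (a b : K) :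
    (a + b / e) ^ 2 * e ≤ a ^ 2 * M + 2 * a * b + b ^ 2 / m := by
  rw [add_div_sq_mul_self (hm.trans_le hme).ne']
  gcongr

theorem stmt_1_general (ε e f : K) (hε0 : 0 < ε) (he1 : 1 ≤ e) (he2 : e ≤ 2 / ε) (hf : 1 ≤ f)
    (s : K) (hs : s = 1 / e) :
    0 < 2 * s * f - s ^ 2 * e ∧
      (2 + s * (2 - ε * e)) ^ 2 / (2 * s * f - s ^ 2 * e) ≤ 8 / ε + 4 - 2 * ε := by
  have he : 0 < e := zero_lt_one.trans_le he1
  have hf' : 1 ≤ 2 * f - 1 := by linarith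
  have hnum : 2 + 1 / e * (2 - ε * e) = (2 - ε) + 2 / e := by
    field_simp
    ring
  rw [hs, two_mul_one_div_mul_sub_one_div_sq_mul he.ne', hnum]
  refine ⟨div_pos (zero_lt_one.trans_le hf') he, ?_⟩
  calc ((2 - ε) + 2 / e) ^ 2 / ((2 * f - 1) / e)
      = ((2 - ε) + 2 / e) ^ 2 * e / (2 * f - 1) := div_div_eq_mul_div _ _ _
    _ ≤ ((2 - ε) + 2 / e) ^ 2 * e := div_le_self (by positivity) hf'
    _ ≤ (2 - ε) ^ 2 * (2 / ε) + 2 * (2 - ε) * 2 + 2 ^ 2 / 1 :=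
        add_div_sq_mul_self_le zero_lt_one he1 he2 _ _
    _ = 8 / ε + 4 - 2 * ε := by
        field_simp
        ring

end

theorem stmt_1 (ε e f : ℝ) (hε0 : 0 < ε) (hε1 : ε < 1)
    (he1 : 1 ≤ e) (he2 : e ≤ 2 / ε) (hf : 1 ≤ f) (s : ℝ) (hs : s = 1 / e) :
    0 < 2 * s * f - s ^ 2 * e ∧
      (2 + s * (2 - ε * e)) ^ 2 / (2 * s * f - s ^ 2 * e) ≤ 8 / ε + 4 - 2 * ε :=
  stmt_1_general ε e f hε0 he1 he2 hf s hs
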